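/- Let F be a normed field whose norm satisfies ‖(n : F)‖ = n for every natural number n, and let A be a non-unital normed algebra over F whose underlying metric space is complete. If A is nil (every element a of A satisfies a^n = 0 for some n ≥ 1), then A is nil of bounded index: there exists a single n ≥ 1 such that a^n = 0 for every a ∈ A. -/

import Mathlib

/-!
By Baire's theorem one of the closed sets `{a | a ^ (n + 1) = 0}` contains a ball, centred at `c`
say. Given `b`, the point `c + k⁻¹ • b` lies in that ball for all large naturals `k`, because
`‖k⁻¹‖ = 1 / k`; rescaling by `k` gives `(k • c + b) ^ (n + 1) = 0` for all large `k`. For each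
linear functional `φ`, the map `s ↦ φ ((s • c + b) ^ (n + 1))` is a polynomial in `s` over `F`
(`exists_polynomial_dual_nupow`) with infinitely many roots, hence is zero. At `s = 0` this gives
`φ (b ^ (n + 1)) = 0`, and linear functionals separate points.
-/

/-- `nupow a n` is the `(n+1)`-fold product `a * a * ⋯ * a` (so `nupow a n = a ^ (n+1)`);
this makes sense in any (possibly non-unital) multiplicative structure. -/
def nupow {A : Type*} [Mul A] (a : A) : ℕ → A
  | 0 => a
  | n + 1 => nupow a n * a

/-- `A` is nil: every element `a` satisfies `a ^ n = 0` for some `n ≥ 1`. -/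
def IsNilAlgebra (A : Type*) [Mul A] [Zero A] : Prop :=
  ∀ a : A, ∃ n : ℕ, nupow a n = 0

/-- `A` is nilpotent: there is `N ≥ 1` such that every product of `N` elements of `A`
(here written as `a` followed by a list `l` of the remaining `N - 1` factors) is zero. -/
def IsNilpotentAlgebra (A : Type*) [Mul A] [Zero A] : Prop :=
  ∃ N : ℕ, 1 ≤ N ∧ ∀ (a : A) (l : List A), l.length + 1 = N → l.foldl (· * ·) a = 0

theorem continuous_nupow {A : Type*} [NonUnitalNormedRing A] (n : ℕ) :
    Continuous fun a : A => nupow a n := by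
  induction n with
  | zero => exact continuous_id
  | succ n ih => exact ih.mul continuous_id

theorem nupow_smul {F A : Type*} [Field F] [NonUnitalRing A] [Module F A]
    [IsScalarTower F A A] [SMulCommClass F A A] (t : F) (a : A) (n : ℕ) :
    nupow (t • a) n = t ^ (n + 1) • nupow a n := by
  induction n with
  | zero => simp [nupow]
  | succ n ih => rw [nupow, ih, nupow, smul_mul_smul_comm, ← pow_succ]

/-- Along an affine line, every linear functional of a fixed power is a polynomial function.
The functional varies in the induction: peeling off the last factor `s • c + b` replaces `φ` by
its composites with right multiplication by `c` and by `b`. -/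
theorem exists_polynomial_dual_nupow {F A : Type*} [Field F] [NonUnitalRing A] [Module F A]
    [IsScalarTower F A A] [SMulCommClass F A A] (b c : A) (n : ℕ) (φ : Module.Dual F A) :
    ∃ p : Polynomial F, ∀ s : F, φ (nupow (s • c + b) n) = p.eval s := by
  induction n generalizing φ with
  | zero =>
    exact ⟨Polynomial.X * Polynomial.C (φ c) + Polynomial.C (φ b), fun s => by
      simp [nupow, mul_comm s]⟩
  | succ n ih =>
    obtain ⟨p, hp⟩ := ih (φ ∘ₗ LinearMap.mulRight F c)
    obtain ⟨q, hq⟩ := ih (φ ∘ₗ LinearMap.mulRight F b)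
    refine ⟨Polynomial.X * p + q, fun s => ?_⟩
    simp [nupow, mul_add, mul_smul_comm, ← hp, ← hq]

/-- A nil complete non-unital normed algebra over a normed field with arithmetic norm
is nil of bounded index. -/
theorem nil_complete_metric_algebra_is_nil_of_bounded_index
    (F : Type*) [NormedField F]
    (A : Type*) [NonUnitalNormedRing A] [NormedSpace F A]
    [IsScalarTower F A A] [SMulCommClass F A A] [CompleteSpace A]
    (hnorm : ∀ n : ℕ, ‖(n : F)‖ = n)
    (hnil : IsNilAlgebra A) :
    ∃ n : ℕ, ∀ a : A, nupow a n = 0 := by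
  classical
  obtain ⟨n, c, hc⟩ := nonempty_interior_of_iUnion_of_closed
    (f := fun n : ℕ => {a : A | nupow a n = 0})
    (fun n => isClosed_eq (continuous_nupow n) continuous_const)
    (Set.eq_univ_of_forall fun a => Set.mem_iUnion.2 (hnil a))
  refine ⟨n, fun b => ?_⟩
  have hinv : Filter.Tendsto (fun k : ℕ => ((k : F))⁻¹) Filter.atTop (nhds 0) := by
    rw [tendsto_zero_iff_norm_tendsto_zero]
    simpa [hnorm] using tendsto_inv_atTop_nhds_zero_nat (𝕜 := ℝ)
  have hlim : Filter.Tendsto (fun k : ℕ => c + ((k : F))⁻¹ • b) Filter.atTop (nhds c) := by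
    simpa using tendsto_const_nhds.add (hinv.smul_const b)
  have hev : ∀ᶠ k : ℕ in Filter.atTop, nupow ((k : F) • c + b) n = 0 := by
    filter_upwards [hlim.eventually (mem_interior_iff_mem_nhds.1 hc), Filter.eventually_gt_atTop 0]
      with k hk hpos
    have hk0 : (k : F) ≠ 0 := by
      rw [← norm_ne_zero_iff, hnorm]
      exact_mod_cast hpos.ne'
    have hscale : (k : F) • c + b = (k : F) • (c + ((k : F))⁻¹ • b) := by
      rw [smul_add, smul_inv_smul₀ hk0]
    have hk' : nupow (c + ((k : F))⁻¹ • b) n = 0 := hk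
    rw [hscale, nupow_smul, hk', smul_zero]
  have hinj : Function.Injective (fun k : ℕ => (k : F)) := fun i j hij => by
    have := congrArg norm hij
    simpa [hnorm] using this
  obtain ⟨N, hN⟩ := Filter.eventually_atTop.1 hev
  rw [← Module.forall_dual_apply_eq_zero_iff F]
  intro φ
  obtain ⟨p, hp⟩ := exists_polynomial_dual_nupow b c n φ
  have hp0 : p = 0 := by
    refine Polynomial.eq_zero_of_infinite_isRoot p
      (((Set.Ici_infinite N).image hinj.injOn).mono ?_)
    rintro _ ⟨k, hk, rfl⟩
    change p.eval (k : F) = 0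
    rw [← hp, hN k hk, map_zero]
  simpa [hp0] using hp 0
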